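/- arXiv:1207.7154 — 2 statements merged into one kernel-verified Lean document; each statement's English description precedes it below -/
import Mathlib

section
/- For n ≥ 1 let J_n = {i ∈ I_{2,3} : i ≤ n}, for i ∈ J_n let q(n;i) = max{q ∈ M_{2,3} : i·q ≤ n}, and for k ≥ 1 let I(k;n) = {i ∈ J_n : q(n;i) = q_k} and α(k;n) = |I(k;n)|. Then for every k ≥ 1: (a) I(k;n) equals the set of i ∈ I_{2,3} with n/q_{k+1} < i ≤ n/q_k, and (b) lim_{n→∞} α(k;n)/n = (1/3)·(1/q_k − 1/q_{k+1}). -/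
/-!
For `i ∈ I_{2,3}`, the largest `q ∈ M_{2,3}` with `i * q ≤ n` equals `q_k` exactly when
`i * q_k ≤ n < i * q_{k+1}`, because no element of `M_{2,3}` lies strictly between consecutive
`q_k` and `q_{k+1}` (`mem_Ikn_iff`). This is (a) after dividing. For (b), `I_{2,3}` consists of the
residue classes `1` and `5` modulo `6`, so it has `m / 3 + O(1)` elements below `m`
(`count_I23`); taking the difference of the counts up to `⌊n / q_k⌋` and up to `⌊n / q_{k+1}⌋`
determines `α(k;n)` up to a bounded error, which vanishes after division by `n`.
-/

open Filter Topology

/-- Membership in `M_{2,3} = {2^a·3^b}`. -/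
def M23 (m : ℕ) : Prop := ∃ a b : ℕ, m = 2 ^ a * 3 ^ b

/-- `q23 k` is the `(k+1)`-st element of `M_{2,3}` in increasing order
(so `q23 0 = q_1 = 1`, `q23 1 = q_2 = 2`, ...). -/
noncomputable def q23 (k : ℕ) : ℕ := Nat.nth M23 k

/-- `I_{2,3}` : positive integers divisible by neither 2 nor 3. -/
def I23 (i : ℕ) : Prop := 0 < i ∧ ¬ 2 ∣ i ∧ ¬ 3 ∣ i

/-- `q(n;i) = max {q ∈ M_{2,3} : i·q ≤ n}`. -/
noncomputable def qmax23 (n i : ℕ) : ℕ := sSup {q : ℕ | M23 q ∧ i * q ≤ n}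

/-- `I(k;n) = {i ∈ I_{2,3} : i ≤ n, q(n;i) = q_k}`. -/
noncomputable def Ikn (k n : ℕ) : Set ℕ :=
  {i : ℕ | I23 i ∧ i ≤ n ∧ qmax23 n i = q23 k}

theorem infinite_M23 : (Set.ofPred M23).Infinite := by
  refine Set.infinite_of_injective_forall_mem (f := fun a : ℕ => 2 ^ a)
    (Nat.pow_right_injective le_rfl) fun a => ⟨a, 0, by simp⟩

theorem M23_q23 (k : ℕ) : M23 (q23 k) := Nat.nth_mem_of_infinite infinite_M23 k

theorem q23_lt_succ (k : ℕ) : q23 k < q23 (k + 1) :=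
  Nat.nth_strictMono infinite_M23 (Nat.lt_succ_self k)

theorem q23_pos (k : ℕ) : 0 < q23 k := by
  obtain ⟨a, b, h⟩ := M23_q23 k
  rw [h]
  positivity

theorem mem_Ikn_iff (k n i : ℕ) :
    i ∈ Ikn k n ↔ I23 i ∧ i * q23 k ≤ n ∧ n < i * q23 (k + 1) := by
  constructor
  · rintro ⟨hi, hin, hq⟩
    have hbdd : BddAbove {q : ℕ | M23 q ∧ i * q ≤ n} :=
      ⟨n, fun q hq => (Nat.le_mul_of_pos_left q hi.1).trans hq.2⟩
    have hmem := Nat.sSup_mem (s := {q : ℕ | M23 q ∧ i * q ≤ n})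
      ⟨1, ⟨0, 0, by simp⟩, by simpa using hin⟩ hbdd
    change qmax23 n i ∈ _ at hmem
    rw [hq] at hmem
    refine ⟨hi, hmem.2, ?_⟩
    by_contra! hle
    have h : q23 (k + 1) ≤ qmax23 n i := le_csSup hbdd ⟨M23_q23 (k + 1), hle⟩
    have := q23_lt_succ k
    omega
  · rintro ⟨hi, h1, h2⟩
    refine ⟨hi, (Nat.le_mul_of_pos_right i (q23_pos k)).trans h1, ?_⟩
    refine IsGreatest.csSup_eq ⟨⟨M23_q23 k, h1⟩, fun q hq => ?_⟩
    exact Nat.le_nth_of_lt_nth_succ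
      (lt_of_mul_lt_mul_left (hq.2.trans_lt h2) (Nat.zero_le i)) hq.1

instance : DecidablePred I23 := fun i => inferInstanceAs (Decidable (0 < i ∧ ¬ 2 ∣ i ∧ ¬ 3 ∣ i))

/-- The two summands count the naturals below `m` congruent to `1` and to `5` modulo `6`. -/
theorem count_I23 (m : ℕ) : Nat.count I23 m = (m + 4) / 6 + m / 6 := by
  induction m with
  | zero => simp
  | succ m ih =>
    have hmod : I23 m ↔ m % 6 = 1 ∨ m % 6 = 5 := by
      unfold I23
      omega
    rw [Nat.count_succ, ih]
    split_ifs with h <;> rw [hmod] at h <;> omega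

theorem card_Ikn (k n : ℕ) : Nat.card (Ikn k n) + Nat.count I23 (n / q23 (k + 1) + 1) =
    Nat.count I23 (n / q23 k + 1) := by
  have hle : n / q23 (k + 1) ≤ n / q23 k := Nat.div_le_div_left (q23_lt_succ k).le (q23_pos k)
  have hset : Ikn k n = ((((Finset.range (n / q23 k + 1)).filter I23) \
      ((Finset.range (n / q23 (k + 1) + 1)).filter I23) : Finset ℕ) : Set ℕ) := by
    ext i
    rw [mem_Ikn_iff, ← Nat.le_div_iff_mul_le (q23_pos k), ← Nat.div_lt_iff_lt_mul (q23_pos (k + 1))]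
    simp only [Finset.coe_sdiff, Finset.coe_filter, Finset.mem_range, Set.mem_sdiff,
      Set.mem_ofPred_eq, Nat.lt_succ_iff, not_and]
    constructor
    · rintro ⟨hi, h1, h2⟩
      exact ⟨⟨h1, hi⟩, fun h => absurd h (by omega)⟩
    · rintro ⟨⟨h1, hi⟩, h⟩
      refine ⟨hi, h1, ?_⟩
      by_contra! h'
      exact h h' hi
  rw [hset, Nat.card_coe_set_eq, Set.ncard_coe_finset, Nat.count_eq_card_filter_range,
    Nat.count_eq_card_filter_range]
  apply Finset.card_sdiff_add_card_eq_card
  exact Finset.filter_subset_filter _ (Finset.range_mono (by omega))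

/-- Counting in two residue classes modulo `6` and rounding `n / q` down each cost `O(1)`. -/
theorem abs_count_sub_le (n q : ℕ) :
    |(Nat.count I23 (n / q + 1) : ℝ) - (n : ℝ) / q / 3| ≤ 1 := by
  have h1 : ((n / q : ℕ) : ℝ) ≤ (n : ℝ) / q := Nat.cast_div_le
  have h2 : (n : ℝ) / q < ((n / q : ℕ) : ℝ) + 1 := by
    rw [← Nat.floor_div_eq_div (K := ℝ)]
    exact Nat.lt_floor_add_one _
  rw [count_I23]
  generalize n / q = m at *
  have h3 : 3 * ((m + 1 + 4) / 6 + (m + 1) / 6) ≤ m + 3 := by omega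
  have h4 : m ≤ 3 * ((m + 1 + 4) / 6 + (m + 1) / 6) + 2 := by omega
  generalize (m + 1 + 4) / 6 + (m + 1) / 6 = c at *
  have h3' : 3 * (c : ℝ) ≤ m + 3 := by exact_mod_cast h3
  have h4' : (m : ℝ) ≤ 3 * c + 2 := by exact_mod_cast h4
  rw [abs_le]
  constructor <;> linarith

/-- For every `k ≥ 1` (here `k : ℕ` encodes the paper's index `k+1`):
(a) for every `n ≥ 1`, `I(k;n)` is the set of `i ∈ I_{2,3}` with `n/q_{k+1} < i ≤ n/q_k`,
and (b) `lim_{n→∞} α(k;n)/n = (1/3)·(1/q_k − 1/q_{k+1})`. -/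
theorem Ikn_eq_and_tendsto (k : ℕ) :
    (∀ n : ℕ, 1 ≤ n →
      Ikn k n = {i : ℕ | I23 i ∧ (n : ℝ) / (q23 (k + 1) : ℝ) < (i : ℝ) ∧
        (i : ℝ) ≤ (n : ℝ) / (q23 k : ℝ)}) ∧
    Tendsto (fun n : ℕ => (Nat.card (Ikn k n) : ℝ) / (n : ℝ)) atTop
      (nhds ((1 / 3 : ℝ) * (1 / (q23 k : ℝ) - 1 / (q23 (k + 1) : ℝ)))) := by
  constructor
  · intro n _
    ext i
    have h1 : (0 : ℝ) < q23 k := by exact_mod_cast q23_pos k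
    have h2 : (0 : ℝ) < q23 (k + 1) := by exact_mod_cast q23_pos (k + 1)
    rw [mem_Ikn_iff, Set.mem_ofPred_eq, div_lt_iff₀ h2, le_div_iff₀ h1]
    norm_cast
    tauto
  · rw [tendsto_iff_norm_sub_tendsto_zero]
    refine squeeze_zero' (Eventually.of_forall fun n => norm_nonneg _) ?_
      (tendsto_const_div_atTop_nhds_zero_nat (2 : ℝ))
    filter_upwards [eventually_gt_atTop 0] with n hn
    have hn' : (0 : ℝ) < n := by exact_mod_cast hn
    have hc : (Nat.card (Ikn k n) : ℝ) + Nat.count I23 (n / q23 (k + 1) + 1) =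
        Nat.count I23 (n / q23 k + 1) := by exact_mod_cast card_Ikn k n
    have ha := abs_le.1 (abs_count_sub_le n (q23 k))
    have hb := abs_le.1 (abs_count_sub_le n (q23 (k + 1)))
    have key : (Nat.card (Ikn k n) : ℝ) / n - 1 / 3 * (1 / (q23 k : ℝ) - 1 / (q23 (k + 1) : ℝ)) =
        (Nat.card (Ikn k n) - ((n : ℝ) / q23 k / 3 - (n : ℝ) / q23 (k + 1) / 3)) / n := by
      field_simp
    rw [key, Real.norm_eq_abs, abs_div, abs_of_pos hn']
    gcongr
    rw [abs_le]
    constructor <;> linarith [ha.1, ha.2, hb.1, hb.2]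
end

section
/- The limit lim_{n→∞} (1/n)·log|X_{Γ;n}| exists and equals Σ_{k=1}^∞ β_{Γ*}·(1/q*_k − 1/q*_{k+1})·log|Σ*_k| (the series converges). -/
/-!
Every positive integer is uniquely `i * m` with `i ∈ I` and `m ∈ M` (`exists_decomp`,
`decomp_unique`), and the constraint at `k = i m` only involves entries in the class `i M`. Hence
`X_n` is a product over `i ∈ I ∩ [1, n]` of the sets `cfg (n / i)` of admissible configurations on
`M ∩ [1, n / i]` (`splitEquiv`).

Write `ent N = log |cfg N|` and `inc m = ent m - ent (m - 1)`. Then `0 ≤ inc ≤ log 2`, because one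
further site at most doubles the number of configurations, and `inc` vanishes outside `M`. Exchanging
the order of summation gives `log |X_n| = ∑_{m ≤ n} inc m * #(I ∩ [1, n / m])` (`log_card_XGam`).
Since `I` is periodic of density `β`, the `m`-th term divided by `n` tends to `inc m * β / m`; it is
dominated by `inc m / m`, which is summable because `∑_{m ∈ M} 1 / m` is a finite Euler product.
Dominated convergence yields the limit `β ∑_m inc m / m` (`tendsto_entropy`).

As `cfg q*_k = Σ*_k` and `log |Σ*_k| = ∑_{j ≤ k} inc q*_j`, summation by parts (`abel`) identifies
`β ∑_j inc q*_j / q*_j` with the stated series (`hasSum_series`).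
-/

open Filter Topology

/-- `C* = lcm(γ_1,…,γ_d)` (here there are `d+1` numbers, encoding `d ≥ 1`). -/
def Cstar (d : ℕ) (γ : Fin (d + 1) → ℕ) : ℕ := Finset.univ.lcm γ

/-- Membership in `M_{Γ*} = {p_1^{m_1}⋯p_Q^{m_Q}}`, where `p_1 < ⋯ < p_Q` are the
prime factors of `C*`: positive integers all of whose prime factors divide `C*`. -/
def MStar (d : ℕ) (γ : Fin (d + 1) → ℕ) (m : ℕ) : Prop :=
  0 < m ∧ ∀ p : ℕ, p.Prime → p ∣ m → p ∣ Cstar d γ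

/-- `qStar d γ k` is the `(k+1)`-st element of `M_{Γ*}` in increasing order
(so `qStar d γ 0 = q*_1 = 1`). -/
noncomputable def qStar (d : ℕ) (γ : Fin (d + 1) → ℕ) (k : ℕ) : ℕ :=
  Nat.nth (MStar d γ) k

/-- `I_{Γ*}` : positive integers divisible by no prime factor `p_j` of `C*`. -/
def IStar (d : ℕ) (γ : Fin (d + 1) → ℕ) (i : ℕ) : Prop :=
  0 < i ∧ ∀ p : ℕ, p.Prime → p ∣ Cstar d γ → ¬ p ∣ i

/-- `p_1·p_2⋯p_Q`, the product of the distinct prime factors of `C*`. -/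
def radStar (d : ℕ) (γ : Fin (d + 1) → ℕ) : ℕ := ∏ p ∈ (Cstar d γ).primeFactors, p

/-- `β_{Γ*} = #(I_{Γ*} ∩ [1, p_1⋯p_Q]) / (p_1⋯p_Q)`. -/
noncomputable def betaStar (d : ℕ) (γ : Fin (d + 1) → ℕ) : ℝ :=
  (Nat.card {i : ℕ | IStar d γ i ∧ i ≤ radStar d γ} : ℝ) / (radStar d γ : ℝ)

/-- `Σ*_k` : functions `U : {m ∈ M_{Γ*} : m ≤ q*_k} → {0,1}` (encoded as functions
`ℕ → ℕ` bounded by `1` and vanishing outside the domain) with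
`U(m)·U(γ_1 m)·⋯·U(γ_d m) = 0` for every `m ∈ M_{Γ*}` with `γ_d·m ≤ q*_k`. -/
def SigStar (d : ℕ) (γ : Fin (d + 1) → ℕ) (k : ℕ) : Set (ℕ → ℕ) :=
  {U | (∀ m, U m ≤ 1) ∧
       (∀ m, MStar d γ m → γ (Fin.last d) * m ≤ qStar d γ k →
          U m * ∏ j, U (γ j * m) = 0) ∧
       (∀ m, ¬(MStar d γ m ∧ m ≤ qStar d γ k) → U m = 0)}

/-- `X_{Γ;n}` : functions `x : {1,…,n} → {0,1}` with `x_k·x_{γ_1 k}⋯x_{γ_d k} = 0`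
for every `k ≥ 1` with `γ_d·k ≤ n`. -/
def XGam (d : ℕ) (γ : Fin (d + 1) → ℕ) (n : ℕ) : Set (ℕ → ℕ) :=
  {x | (∀ m, x m ≤ 1) ∧
       (∀ k, 1 ≤ k → γ (Fin.last d) * k ≤ n → x k * ∏ j, x (γ j * k) = 0) ∧
       (∀ m, m = 0 ∨ n < m → x m = 0)}

namespace EntropyStar

variable {d : ℕ} {γ : Fin (d + 1) → ℕ}

/-! ### The semigroup `M` and the complementary integers `I` -/

lemma gamma_pos (h1 : 1 < γ 0) (hmono : StrictMono γ) (j : Fin (d + 1)) : 1 < γ j :=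
  lt_of_lt_of_le h1 (hmono.monotone (Fin.zero_le j))

lemma gamma_dvd (j : Fin (d + 1)) : γ j ∣ Cstar d γ :=
  Finset.dvd_lcm (Finset.mem_univ j)

lemma Cstar_ne_zero (h1 : 1 < γ 0) (hmono : StrictMono γ) : Cstar d γ ≠ 0 := by
  unfold Cstar
  rw [Ne, Finset.lcm_eq_zero_iff]
  rintro ⟨j, -, hj⟩
  have := gamma_pos h1 hmono j
  omega

lemma Mstar_one : MStar d γ 1 :=
  ⟨one_pos, fun _ hp h => absurd (Nat.dvd_one.1 h) hp.ne_one⟩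

lemma Mstar_mul {a b : ℕ} (ha : MStar d γ a) (hb : MStar d γ b) : MStar d γ (a * b) :=
  ⟨Nat.mul_pos ha.1 hb.1, fun p hp h => (hp.dvd_mul.1 h).elim (ha.2 p hp) (hb.2 p hp)⟩

lemma Mstar_gamma (h1 : 1 < γ 0) (hmono : StrictMono γ) (j : Fin (d + 1)) : MStar d γ (γ j) :=
  ⟨by have := gamma_pos h1 hmono j; omega, fun _ _ h => h.trans (gamma_dvd j)⟩

lemma Mstar_infinite (h1 : 1 < γ 0) (hmono : StrictMono γ) :
    (Set.ofPred (MStar d γ)).Infinite := by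
  refine Set.infinite_of_injective_forall_mem (f := fun n : ℕ => γ 0 ^ n)
    (Nat.pow_right_injective h1) fun n => ?_
  change MStar d γ (γ 0 ^ n)
  induction n with
  | zero => simpa using Mstar_one
  | succ n ih => rw [pow_succ]; exact Mstar_mul ih (Mstar_gamma h1 hmono 0)

lemma exists_decomp (k : ℕ) (hk : k ≠ 0) : ∃ i m, IStar d γ i ∧ MStar d γ m ∧ k = i * m := by
  induction k using induction_on_primes with
  | zero => exact absurd rfl hk
  | one =>
    exact ⟨1, 1, ⟨one_pos, fun p hp _ h => hp.ne_one (Nat.dvd_one.1 h)⟩, Mstar_one, rfl⟩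
  | prime_mul p a hp ih =>
    have hp' : p.Prime := hp
    obtain ⟨i, m, hi, hm, rfl⟩ := ih (by rintro rfl; simp at hk)
    by_cases h : p ∣ Cstar d γ
    · refine ⟨i, p * m, hi, ⟨Nat.mul_pos hp'.pos hm.1, fun r hr hrd => ?_⟩, by ring⟩
      rcases hr.dvd_mul.1 hrd with h' | h'
      · rwa [(Nat.prime_dvd_prime_iff_eq hr hp').1 h']
      · exact hm.2 r hr h'
    · refine ⟨p * i, m, ⟨Nat.mul_pos hp'.pos hi.1, fun r hr hrC hrd => ?_⟩, hm, by ring⟩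
      rcases hr.dvd_mul.1 hrd with h' | h'
      · rw [(Nat.prime_dvd_prime_iff_eq hr hp').1 h'] at hrC
        exact h hrC
      · exact hi.2 r hr hrC h'

lemma coprime_IM {i m : ℕ} (hi : IStar d γ i) (hm : MStar d γ m) : Nat.Coprime i m :=
  Nat.coprime_of_dvd fun p hp hpi hpm => hi.2 p hp (hm.2 p hp hpm) hpi

lemma decomp_unique {i m i' m' : ℕ} (hi : IStar d γ i) (hm : MStar d γ m)
    (hi' : IStar d γ i') (hm' : MStar d γ m') (h : i * m = i' * m') : i = i' ∧ m = m' := by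
  have hii : i = i' := Nat.dvd_antisymm
    ((coprime_IM hi hm').dvd_of_dvd_mul_right (h ▸ dvd_mul_right i m))
    ((coprime_IM hi' hm).dvd_of_dvd_mul_right (h ▸ dvd_mul_right i' m'))
  subst hii
  exact ⟨rfl, Nat.eq_of_mul_eq_mul_left hi.1 h⟩

lemma summable_M (h1 : 1 < γ 0) (hmono : StrictMono γ) :
    Summable (fun m : {m : ℕ // MStar d γ m} => 1 / ((m : ℕ) : ℝ)) := by
  let f : ℕ →* ℝ :=
    { toFun := fun n => (n : ℝ)⁻¹
      map_one' := by simp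
      map_mul' := fun a b => by push_cast; rw [mul_inv] }
  have hf : ∀ {p : ℕ}, p.Prime → ‖f p‖ < 1 := fun {p} hp => by
    have : (1 : ℝ) < p := by exact_mod_cast hp.one_lt
    change ‖(p : ℝ)⁻¹‖ < 1
    rw [norm_inv, Real.norm_natCast]
    exact inv_lt_one_of_one_lt₀ this
  have key := (EulerProduct.summable_and_hasSum_factoredNumbers_prod_filter_prime_geometric hf
    (Cstar d γ).primeFactors).1
  have hmem : ∀ m : ℕ, MStar d γ m → m ∈ Nat.factoredNumbers (Cstar d γ).primeFactors := by
    intro m hm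
    rw [Nat.mem_factoredNumbers']
    exact fun p hp hpm => Nat.mem_primeFactors.2 ⟨hp, hm.2 p hp hpm, Cstar_ne_zero h1 hmono⟩
  let e : {m : ℕ // MStar d γ m} → Nat.factoredNumbers (Cstar d γ).primeFactors :=
    fun m => ⟨m.1, hmem m.1 m.2⟩
  have he : Function.Injective e := fun a b hab => Subtype.ext (Subtype.mk.inj hab)
  refine (key.comp_injective he).congr fun m => ?_
  change ‖((m : ℕ) : ℝ)⁻¹‖ = _
  rw [norm_inv, Real.norm_natCast, one_div]

/-! ### Admissible configurations on `M ∩ [1, N]` -/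

/-- The admissible configurations on `M ∩ [1, N]`, for an arbitrary bound `N`; at `N = q*_k` this
is `Σ*_k` by definition. -/
def cfg (d : ℕ) (γ : Fin (d + 1) → ℕ) (N : ℕ) : Set (ℕ → ℕ) :=
  {U | (∀ m, U m ≤ 1) ∧
       (∀ m, MStar d γ m → γ (Fin.last d) * m ≤ N → U m * ∏ j, U (γ j * m) = 0) ∧
       (∀ m, ¬(MStar d γ m ∧ m ≤ N) → U m = 0)}

lemma cfg_zero : cfg d γ 0 = {0} := by
  ext U
  constructor
  · rintro ⟨-, -, h⟩
    ext m
    exact h m fun hm => by have := hm.1.1; omega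
  · rintro rfl
    exact ⟨by simp, by simp, by simp⟩

lemma zero_mem_cfg (N : ℕ) : (0 : ℕ → ℕ) ∈ cfg d γ N := ⟨by simp, by simp, by simp⟩

lemma cfg_eq_of_gap (h1 : 1 < γ 0) (hmono : StrictMono γ) {a b : ℕ} (hab : a ≤ b)
    (h : ∀ m, MStar d γ m → m ≤ b → m ≤ a) : cfg d γ a = cfg d γ b := by
  ext U
  refine and_congr_right fun _ => and_congr ?_ ?_
  · refine forall_congr' fun m => forall_congr' fun hm => ?_
    have : γ (Fin.last d) * m ≤ a ↔ γ (Fin.last d) * m ≤ b :=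
      ⟨fun h' => h'.trans hab, h _ (Mstar_mul (Mstar_gamma h1 hmono _) hm)⟩
    rw [this]
  · refine forall_congr' fun m => ?_
    have : (MStar d γ m ∧ m ≤ a) ↔ (MStar d γ m ∧ m ≤ b) :=
      ⟨fun h' => ⟨h'.1, h'.2.trans hab⟩, fun h' => ⟨h'.1, h m h'.1 h'.2⟩⟩
    rw [this]

lemma cfg_subset_succ (N : ℕ) : cfg d γ N ⊆ cfg d γ (N + 1) := by
  rintro U ⟨hU1, hU2, hU3⟩
  refine ⟨hU1, fun m hm hle => ?_, fun m hm => hU3 m fun h => hm ⟨h.1, h.2.trans (Nat.le_succ N)⟩⟩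
  rcases Nat.lt_or_ge N (γ (Fin.last d) * m) with h | h
  · have : U (γ (Fin.last d) * m) = 0 := hU3 _ fun h' => by omega
    rw [Finset.prod_eq_zero (Finset.mem_univ (Fin.last d)) this, mul_zero]
  · exact hU2 m hm h

/-- Erasing the entry at `N + 1` maps a configuration for `N + 1` to one for `N`, so the former arises
from the latter by putting `0` or `1` at `N + 1`. -/
lemma cfg_succ_subset (N : ℕ) :
    cfg d γ (N + 1) ⊆ cfg d γ N ∪ (fun U => Function.update U (N + 1) 1) '' cfg d γ N := by
  rintro U ⟨hU1, hU2, hU3⟩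
  have hV : Function.update U (N + 1) 0 ∈ cfg d γ N := by
    have hle : ∀ m, Function.update U (N + 1) 0 m ≤ U m := by
      intro m
      rcases eq_or_ne m (N + 1) with rfl | h
      · simp
      · simp [Function.update_of_ne h]
    refine ⟨fun m => (hle m).trans (hU1 m), fun m hm hle' => ?_, fun m hm => ?_⟩
    · have h0 := hU2 m hm (hle'.trans (Nat.le_succ N))
      refine Nat.le_zero.1 (le_trans ?_ h0.le)
      exact Nat.mul_le_mul (hle m) (Finset.prod_le_prod' fun j _ => hle _)
    · rcases eq_or_ne m (N + 1) with rfl | h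
      · simp
      · rw [Function.update_of_ne h]
        exact hU3 m fun h' => hm ⟨h'.1, by omega⟩
  have h1 := hU1 (N + 1)
  interval_cases hval : U (N + 1)
  · left
    rwa [← hval, Function.update_eq_self] at hV
  · right
    refine ⟨_, hV, ?_⟩
    change Function.update (Function.update U (N + 1) 0) (N + 1) 1 = U
    rw [Function.update_idem]
    exact Function.update_eq_self_iff.2 hval.symm

lemma cfg_finite (N : ℕ) : (cfg d γ N).Finite := by
  induction N with
  | zero => rw [cfg_zero]; exact Set.finite_singleton _
  | succ N ih => exact (ih.union (ih.image _)).subset (cfg_succ_subset N)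

lemma cfg_card_pos (N : ℕ) : 0 < (cfg d γ N).ncard :=
  (Set.ncard_pos (cfg_finite N)).2 ⟨0, zero_mem_cfg N⟩

/-- The logarithm of the number of admissible configurations on `M ∩ [1, N]`. -/
noncomputable def ent (d : ℕ) (γ : Fin (d + 1) → ℕ) (N : ℕ) : ℝ := Real.log (cfg d γ N).ncard

/-- The increment of `ent` at `m`, with value `0` at `m = 0` by truncated subtraction. -/
noncomputable def inc (d : ℕ) (γ : Fin (d + 1) → ℕ) (m : ℕ) : ℝ := ent d γ m - ent d γ (m - 1)

lemma ent_zero : ent d γ 0 = 0 := by simp [ent, cfg_zero]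

lemma inc_nonneg (m : ℕ) : 0 ≤ inc d γ m := by
  cases m with
  | zero => simp [inc]
  | succ N =>
    refine sub_nonneg.2 (Real.log_le_log (by exact_mod_cast cfg_card_pos _) ?_)
    exact_mod_cast Set.ncard_le_ncard (cfg_subset_succ N) (cfg_finite _)

lemma inc_le (m : ℕ) : inc d γ m ≤ Real.log 2 := by
  cases m with
  | zero => simp [inc, Real.log_nonneg]
  | succ N =>
    have hp : (0 : ℝ) < (cfg d γ N).ncard := by exact_mod_cast cfg_card_pos _
    have hp' : (0 : ℝ) < (cfg d γ (N + 1)).ncard := by exact_mod_cast cfg_card_pos _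
    have hcard : (cfg d γ (N + 1)).ncard ≤ 2 * (cfg d γ N).ncard := by
      refine (Set.ncard_le_ncard (cfg_succ_subset N)
        ((cfg_finite N).union ((cfg_finite N).image _))).trans ?_
      refine (Set.ncard_union_le _ _).trans ?_
      have := Set.ncard_image_le (f := fun U => Function.update U (N + 1) 1) (cfg_finite (γ := γ) N)
      omega
    change Real.log _ - Real.log (cfg d γ N).ncard ≤ _
    rw [sub_le_iff_le_add, ← Real.log_mul (by norm_num) hp.ne']
    exact Real.log_le_log hp' (by exact_mod_cast hcard)

lemma inc_eq_zero (h1 : 1 < γ 0) (hmono : StrictMono γ) {m : ℕ} (hm : ¬ MStar d γ m) :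
    inc d γ m = 0 := by
  rw [inc, ent, ent, cfg_eq_of_gap h1 hmono (Nat.sub_le m 1), sub_self]
  intro r hr hrm
  have : r ≠ m := by rintro rfl; exact hm hr
  omega

lemma ent_eq_sum (N : ℕ) : ent d γ N = ∑ m ∈ Finset.Icc 1 N, inc d γ m := by
  induction N with
  | zero => simp [ent_zero]
  | succ N ih => rw [Finset.sum_Icc_succ_top (by omega), ← ih]; simp [inc]

lemma summable_inc (h1 : 1 < γ 0) (hmono : StrictMono γ) :
    Summable (fun m : ℕ => inc d γ m * (1 / (m : ℝ))) := by
  have hs : Summable (fun m : {m : ℕ // MStar d γ m} => inc d γ m * (1 / ((m : ℕ) : ℝ))) := by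
    refine Summable.of_nonneg_of_le (fun m => mul_nonneg (inc_nonneg _) (by positivity))
      (fun m => ?_) ((summable_M h1 hmono).mul_left (Real.log 2))
    exact mul_le_mul_of_nonneg_right (inc_le _) (by positivity)
  refine (Subtype.val_injective.summable_iff fun m hm => ?_).1 hs
  rw [inc_eq_zero h1 hmono, zero_mul]
  intro hM
  exact hm ⟨⟨m, hM⟩, rfl⟩

/-! ### Counting `I` -/

open scoped Classical in
/-- The elements of `I ∩ [1, x]`. -/
noncomputable def Iset (d : ℕ) (γ : Fin (d + 1) → ℕ) (x : ℕ) : Finset ℕ :=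
  (Finset.Icc 1 x).filter (IStar d γ)

lemma mem_Iset {x i : ℕ} : i ∈ Iset d γ x ↔ i ≤ x ∧ IStar d γ i := by
  simp only [Iset, Finset.mem_filter, Finset.mem_Icc]
  exact ⟨fun h => ⟨h.1.2, h.2⟩, fun h => ⟨⟨h.2.1, h.1⟩, h.2⟩⟩

lemma card_Iset_le (x : ℕ) : (Iset d γ x).card ≤ x := by
  classical
  refine (Finset.card_filter_le _ _).trans ?_
  simp

lemma radStar_pos : 0 < radStar d γ :=
  Finset.prod_pos fun _ hp => (Nat.prime_of_mem_primeFactors hp).pos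

lemma dvd_radStar (h1 : 1 < γ 0) (hmono : StrictMono γ) {p : ℕ} (hp : p.Prime)
    (h : p ∣ Cstar d γ) : p ∣ radStar d γ :=
  Finset.dvd_prod_of_mem (fun p => p)
    (Nat.mem_primeFactors.2 ⟨hp, h, Cstar_ne_zero h1 hmono⟩)

lemma not_Istar_rad (h1 : 1 < γ 0) (hmono : StrictMono γ) : ¬ IStar d γ (radStar d γ) := by
  intro h
  obtain ⟨p, hp, hpγ⟩ := Nat.exists_prime_and_dvd (n := γ 0) (by omega)
  have hpC := hpγ.trans (gamma_dvd 0)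
  exact h.2 p hp hpC (dvd_radStar h1 hmono hp hpC)

lemma Istar_add_rad (h1 : 1 < γ 0) (hmono : StrictMono γ) (i : ℕ) (hi : 0 < i) :
    IStar d γ (radStar d γ + i) ↔ IStar d γ i := by
  refine and_congr (by simp [hi]) ?_
  refine forall_congr' fun p => forall_congr' fun hp => forall_congr' fun hpC => ?_
  rw [Nat.dvd_add_right (dvd_radStar h1 hmono hp hpC)]

lemma card_Iset_add (h1 : 1 < γ 0) (hmono : StrictMono γ) (x : ℕ) :
    (Iset d γ (radStar d γ + x)).card = (Iset d γ (radStar d γ)).card + (Iset d γ x).card := by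
  have : Iset d γ (radStar d γ + x) =
      Iset d γ (radStar d γ) ∪ (Iset d γ x).image (radStar d γ + ·) := by
    ext i
    simp only [Finset.mem_union, Finset.mem_image, mem_Iset]
    constructor
    · rintro ⟨hi, hI⟩
      rcases Nat.lt_or_ge (radStar d γ) i with h | h
      · obtain ⟨k, rfl⟩ := Nat.exists_eq_add_of_lt h
        right
        exact ⟨k + 1, ⟨by omega, (Istar_add_rad h1 hmono _ (by omega)).1 hI⟩, by omega⟩
      · exact Or.inl ⟨h, hI⟩
    · rintro (⟨hi, hI⟩ | ⟨k, ⟨hk, hI⟩, rfl⟩)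
      · exact ⟨by omega, hI⟩
      · exact ⟨by omega, (Istar_add_rad h1 hmono _ hI.1).2 hI⟩
  rw [this, Finset.card_union_of_disjoint, Finset.card_image_of_injective _ (add_right_injective _)]
  rw [Finset.disjoint_left]
  intro i hi hi'
  obtain ⟨k, hk, rfl⟩ := Finset.mem_image.1 hi'
  have := (mem_Iset.1 hi).1
  have := (mem_Iset.1 hk).2.1
  omega

lemma betaStar_eq : betaStar d γ = (Iset d γ (radStar d γ)).card / (radStar d γ : ℝ) := by
  have : {i : ℕ | IStar d γ i ∧ i ≤ radStar d γ} = (Iset d γ (radStar d γ) : Set ℕ) := by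
    ext i
    simp [mem_Iset, and_comm]
  rw [betaStar, this]
  simp

lemma betaStar_nonneg : 0 ≤ betaStar d γ := by unfold betaStar; positivity

lemma betaStar_le_one : betaStar d γ ≤ 1 := by
  rw [betaStar_eq]
  exact div_le_one_of_le₀ (by exact_mod_cast card_Iset_le _) (by positivity)

/-- `I` is periodic with period `rad`, hence `#(I ∩ [1, x])` differs from `β x` by at most one
period. -/
lemma abs_card_Iset_sub_le (h1 : 1 < γ 0) (hmono : StrictMono γ) (x : ℕ) :
    |((Iset d γ x).card : ℝ) - betaStar d γ * x| ≤ radStar d γ := by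
  have hR : (0 : ℝ) < radStar d γ := by exact_mod_cast radStar_pos
  induction x using Nat.strong_induction_on with
  | _ x ih =>
    rcases Nat.lt_or_ge x (radStar d γ) with h | h
    · have hx : (x : ℝ) ≤ radStar d γ := by exact_mod_cast h.le
      have h2 : ((Iset d γ x).card : ℝ) ≤ x := by exact_mod_cast card_Iset_le x
      have h3 : betaStar d γ * x ≤ x := mul_le_of_le_one_left (by positivity) betaStar_le_one
      have h4 : 0 ≤ betaStar d γ * x := mul_nonneg betaStar_nonneg (by positivity)
      have h5 : (0 : ℝ) ≤ (Iset d γ x).card := by positivity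
      rw [abs_le]
      constructor <;> linarith
    · obtain ⟨y, rfl⟩ := Nat.exists_eq_add_of_le h
      have hb : betaStar d γ * radStar d γ = (Iset d γ (radStar d γ)).card := by
        rw [betaStar_eq, div_mul_cancel₀ _ hR.ne']
      have := ih y (by have := radStar_pos (d := d) (γ := γ); omega)
      rw [card_Iset_add h1 hmono]
      push_cast
      rw [mul_add, hb]
      convert this using 2
      ring

lemma tendsto_card_Iset (h1 : 1 < γ 0) (hmono : StrictMono γ) (m : ℕ) (hm : 0 < m) :
    Tendsto (fun n : ℕ => ((Iset d γ (n / m)).card : ℝ) / n) atTop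
      (𝓝 (betaStar d γ * (1 / m))) := by
  have hm' : (0 : ℝ) < m := by exact_mod_cast hm
  rw [tendsto_iff_norm_sub_tendsto_zero]
  have hlim : Tendsto (fun n : ℕ => ((radStar d γ : ℝ) + 1) / n) atTop (𝓝 0) :=
    tendsto_const_div_atTop_nhds_zero_nat _
  refine squeeze_zero' (Eventually.of_forall fun _ => norm_nonneg _) ?_ hlim
  filter_upwards [eventually_gt_atTop 0] with n hn
  have hn' : (0 : ℝ) < n := by exact_mod_cast hn
  have e : ((Iset d γ (n / m)).card : ℝ) / n - betaStar d γ * (1 / m)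
      = (((Iset d γ (n / m)).card : ℝ) - betaStar d γ * (n / m)) / n := by
    field_simp
  rw [e, norm_div, Real.norm_eq_abs, Real.norm_eq_abs, abs_of_pos hn']
  refine div_le_div_of_nonneg_right ?_ hn'.le
  have hA := abs_le.1 (abs_card_Iset_sub_le h1 hmono (n / m))
  have hfl : ((n / m : ℕ) : ℝ) ≤ n / m := Nat.cast_div_le
  have hfl' : (n : ℝ) / m ≤ (n / m : ℕ) + 1 := by
    rw [div_le_iff₀ hm']
    have := Nat.lt_div_mul_add (a := n) hm
    have h' : n ≤ (n / m + 1) * m := by rw [add_mul, one_mul]; exact this.le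
    exact_mod_cast h'
  have hb0 := betaStar_nonneg (d := d) (γ := γ)
  have hb1 := betaStar_le_one (d := d) (γ := γ)
  have k1 := mul_le_mul_of_nonneg_left hfl hb0
  have k2 := mul_le_mul_of_nonneg_left hfl' hb0
  rw [abs_le]
  constructor <;> linarith

/-! ### Factorisation of `X_n` along the classes `i M` -/

open scoped Classical in
/-- A configuration on `[1, n]` is the same as a family of configurations on `M ∩ [1, n / i]`,
one for each `i ∈ I ∩ [1, n]`: the constraint at `k = i m` involves only entries in `i M`. -/
noncomputable def splitEquiv (h1 : 1 < γ 0) (hmono : StrictMono γ) (n : ℕ) :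
    XGam d γ n ≃ ((i : Iset d γ n) → cfg d γ (n / i)) := by
  have hpos : ∀ i : Iset d γ n, 0 < (i : ℕ) := fun i => (mem_Iset.1 i.2).2.1
  refine Equiv.ofBijective (fun x i => ⟨fun m => if MStar d γ m then x.1 (i * m) else 0, ?_⟩)
    ⟨?_, ?_⟩
  · obtain ⟨x, hx1, hx2, hx3⟩ := x
    refine ⟨fun m => ?_, fun m hm hle => ?_, fun m hm => ?_⟩
    · dsimp only
      split_ifs
      · exact hx1 _
      · exact Nat.zero_le _
    · have key := hx2 (i * m) (Nat.mul_pos (hpos i) hm.1) (by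
        rw [Nat.le_div_iff_mul_le (hpos i)] at hle
        calc _ = γ (Fin.last d) * m * i := by ring
          _ ≤ n := hle)
      simp only [hm, if_true, fun j => Mstar_mul (Mstar_gamma h1 hmono j) hm]
      rw [← key]
      congr 1
      exact Finset.prod_congr rfl fun j _ => by rw [mul_left_comm]
    · dsimp only
      split_ifs with hM
      · refine hx3 _ (Or.inr ?_)
        by_contra hcon
        refine hm ⟨hM, (Nat.le_div_iff_mul_le (hpos i)).2 ?_⟩
        rw [mul_comm]
        omega
      · rfl
  · intro x y hxy
    refine Subtype.ext (funext fun k => ?_)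
    by_cases hk : k = 0 ∨ n < k
    · rw [x.2.2.2 k hk, y.2.2.2 k hk]
    · push Not at hk
      obtain ⟨i, m, hi, hm, rfl⟩ := exists_decomp (d := d) (γ := γ) k hk.1
      have hin : i ∈ Iset d γ n :=
        mem_Iset.2 ⟨(Nat.le_mul_of_pos_right i hm.1).trans hk.2, hi⟩
      have := congrFun (congrArg Subtype.val (congrFun hxy ⟨i, hin⟩)) m
      simpa [hm] using this
  · intro U
    have hdec : ∀ k : ℕ, ∃ p : ℕ × ℕ, k ≠ 0 → IStar d γ p.1 ∧ MStar d γ p.2 ∧ k = p.1 * p.2 := by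
      intro k
      by_cases hk : k = 0
      · exact ⟨0, fun h => absurd hk h⟩
      · obtain ⟨i, m, h⟩ := exists_decomp (d := d) (γ := γ) k hk
        exact ⟨(i, m), fun _ => h⟩
    choose f hf using hdec
    let x : ℕ → ℕ := fun k =>
      if k = 0 then 0 else if h : (f k).1 ∈ Iset d γ n then (U ⟨_, h⟩).1 (f k).2 else 0
    have hx : ∀ (i : Iset d γ n) (m : ℕ), MStar d γ m → x (i * m) = (U i).1 m := by
      intro i m hm
      have hne : (i : ℕ) * m ≠ 0 := (Nat.mul_pos (hpos i) hm.1).ne'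
      obtain ⟨hI, hM, he⟩ := hf _ hne
      obtain ⟨e1, e2⟩ := decomp_unique (mem_Iset.1 i.2).2 hm hI hM he
      have hmem : (f (i * m)).1 ∈ Iset d γ n := e1 ▸ i.2
      have hi : (⟨_, hmem⟩ : Iset d γ n) = i := Subtype.ext e1.symm
      simp only [x, if_neg hne, dif_pos hmem]
      have hcongr : ∀ i' : Iset d γ n, i' = i → (U i').1 = (U i).1 := by
        rintro _ rfl
        rfl
      rw [hcongr _ hi, ← e2]
    refine ⟨⟨x, ?_, ?_, ?_⟩, ?_⟩
    · intro k
      dsimp only [x]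
      split_ifs
      · exact Nat.zero_le _
      · exact (U _).2.1 _
      · exact Nat.zero_le _
    · intro k hk hle
      obtain ⟨i, m, hi, hm, rfl⟩ := exists_decomp (d := d) (γ := γ) k (by omega)
      have hγ := gamma_pos h1 hmono (Fin.last d)
      have hin : i ∈ Iset d γ n := by
        refine mem_Iset.2 ⟨?_, hi⟩
        calc i ≤ i * m := Nat.le_mul_of_pos_right i hm.1
          _ ≤ γ (Fin.last d) * (i * m) := Nat.le_mul_of_pos_left _ (by omega)
          _ ≤ n := hle
      have e0 := hx ⟨i, hin⟩ m hm
      have ej : ∀ j, x (γ j * (i * m)) = (U ⟨i, hin⟩).1 (γ j * m) := fun j => by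
        rw [← hx ⟨i, hin⟩ _ (Mstar_mul (Mstar_gamma h1 hmono j) hm), mul_left_comm]
      dsimp only at e0
      rw [e0, Finset.prod_congr rfl fun j _ => ej j]
      refine (U ⟨i, hin⟩).2.2.1 m hm ((Nat.le_div_iff_mul_le hi.1).2 ?_)
      calc _ = γ (Fin.last d) * (i * m) := by ring
        _ ≤ n := hle
    · intro k hk
      dsimp only [x]
      split_ifs with h0 hmem
      · rfl
      · refine (U ⟨_, hmem⟩).2.2.2 _ fun hcon => ?_
        have hle := (Nat.le_div_iff_mul_le (hpos ⟨_, hmem⟩)).1 hcon.2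
        have he := (hf k h0).2.2
        dsimp only at hle
        rw [mul_comm, ← he] at hle
        omega
      · rfl
    · refine funext fun i => Subtype.ext (funext fun m => ?_)
      dsimp only
      split_ifs with hM
      · exact hx i m hM
      · exact ((U i).2.2.2 m fun h => hM h.1).symm

lemma log_card_XGam (h1 : 1 < γ 0) (hmono : StrictMono γ) (n : ℕ) :
    Real.log (Nat.card (XGam d γ n)) =
      ∑ m ∈ Finset.Icc 1 n, inc d γ m * (Iset d γ (n / m)).card := by
  rw [Nat.card_congr (splitEquiv h1 hmono n), Nat.card_pi, Nat.cast_prod, Real.log_prod]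
  · have e1 : ∑ i : Iset d γ n, Real.log (Nat.card (cfg d γ (n / i)))
        = ∑ i ∈ Iset d γ n, ent d γ (n / i) :=
      Finset.sum_coe_sort (Iset d γ n) fun i => ent d γ (n / i)
    rw [e1]
    simp only [ent_eq_sum]
    rw [Finset.sum_comm' (t' := Finset.Icc 1 n) (s' := fun m => Iset d γ (n / m))]
    · refine Finset.sum_congr rfl fun m _ => ?_
      rw [Finset.sum_const, nsmul_eq_mul, mul_comm]
    · intro i m
      simp only [mem_Iset, Finset.mem_Icc]
      constructor
      · rintro ⟨⟨_, hI⟩, hm, hmi⟩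
        rw [Nat.le_div_iff_mul_le hI.1] at hmi
        refine ⟨⟨(Nat.le_div_iff_mul_le hm).2 (by rwa [mul_comm]), hI⟩, hm, ?_⟩
        exact (Nat.le_mul_of_pos_right m hI.1).trans hmi
      · rintro ⟨⟨hi, hI⟩, hm, _⟩
        rw [Nat.le_div_iff_mul_le hm] at hi
        refine ⟨⟨(Nat.le_mul_of_pos_right i hm).trans hi, hI⟩, hm, ?_⟩
        exact (Nat.le_div_iff_mul_le hI.1).2 (by rwa [mul_comm])
  · intro i _
    exact_mod_cast (cfg_card_pos (d := d) (γ := γ) (n / i)).ne'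

lemma tendsto_entropy (h1 : 1 < γ 0) (hmono : StrictMono γ) :
    Tendsto (fun n : ℕ => Real.log (Nat.card (XGam d γ n)) / (n : ℝ)) atTop
      (𝓝 (∑' m : ℕ, inc d γ m * (betaStar d γ * (1 / m)))) := by
  have hrep : ∀ n : ℕ, Real.log (Nat.card (XGam d γ n)) / (n : ℝ) =
      ∑' m : ℕ, inc d γ m * (((Iset d γ (n / m)).card : ℝ) / n) := by
    intro n
    rw [log_card_XGam h1 hmono, Finset.sum_div, tsum_eq_sum (s := Finset.Icc 1 n)]
    · exact Finset.sum_congr rfl fun m _ => by rw [mul_div_assoc]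
    · intro m hm
      have : n / m = 0 := by
        rw [Nat.div_eq_zero_iff]
        rw [Finset.mem_Icc] at hm
        omega
      have h0 : (Iset d γ 0).card = 0 := Nat.le_zero.1 (card_Iset_le 0)
      simp [this, h0]
  simp only [hrep]
  refine tendsto_tsum_of_dominated_convergence (summable_inc h1 hmono) (fun m => ?_)
    (Eventually.of_forall fun n m => ?_)
  · rcases Nat.eq_zero_or_pos m with rfl | hm
    · simp [inc]
    · exact (tendsto_card_Iset h1 hmono m hm).const_mul _
  · rw [Real.norm_of_nonneg (mul_nonneg (inc_nonneg _) (by positivity))]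
    refine mul_le_mul_of_nonneg_left ?_ (inc_nonneg _)
    rcases Nat.eq_zero_or_pos n with rfl | hn
    · simp
    have hn' : (0 : ℝ) < n := by exact_mod_cast hn
    rw [div_le_iff₀ hn', one_div_mul_eq_div]
    calc ((Iset d γ (n / m)).card : ℝ) ≤ (n / m : ℕ) := by exact_mod_cast card_Iset_le _
      _ ≤ n / m := Nat.cast_div_le

/-! ### Summation by parts -/

lemma qStar_strictMono (h1 : 1 < γ 0) (hmono : StrictMono γ) : StrictMono (qStar d γ) :=
  Nat.nth_strictMono (Mstar_infinite h1 hmono)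

lemma qStar_mem (h1 : 1 < γ 0) (hmono : StrictMono γ) (k : ℕ) : MStar d γ (qStar d γ k) :=
  Nat.nth_mem_of_infinite (Mstar_infinite h1 hmono) k

lemma ent_qStar (h1 : 1 < γ 0) (hmono : StrictMono γ) (k : ℕ) :
    ent d γ (qStar d γ k) = ∑ j ∈ Finset.range (k + 1), inc d γ (qStar d γ j) := by
  induction k with
  | zero =>
    have hq : ent d γ (qStar d γ 0 - 1) = 0 := by
      rw [ent, ← cfg_eq_of_gap h1 hmono (Nat.zero_le _), cfg_zero]
      · simp
      · intro m hm hle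
        have hqm : qStar d γ 0 ≤ m := by
          rw [qStar, Nat.nth_zero]
          exact Nat.sInf_le hm
        have := hm.1
        omega
    simp [inc, hq]
  | succ k ih =>
    have hlt := qStar_strictMono h1 hmono (Nat.lt_succ_self k)
    have hq : ent d γ (qStar d γ (k + 1) - 1) = ent d γ (qStar d γ k) := by
      rw [ent, ent, cfg_eq_of_gap h1 hmono (a := qStar d γ k)
        (b := qStar d γ (k + 1) - 1) (Nat.le_sub_one_of_lt hlt)]
      intro m hm hle
      have := (qStar_mem h1 hmono (k + 1)).1
      exact Nat.le_nth_of_lt_nth_succ (by change m < qStar d γ (k + 1); omega) hm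
    rw [Finset.sum_range_succ, ← ih, inc, hq]
    ring

/-- Abel summation for a nonnegative antitone null sequence `a` against the partial sums of a
nonnegative `D` with `∑ D a < ∞`. The boundary term `a_K (D_0 + ⋯ + D_{K-1})` vanishes in the limit
by dominated convergence, since each summand `a_K D_j` with `j < K` is at most `a_j D_j`. -/
lemma abel {a D : ℕ → ℝ} (ha : Antitone a) (ha0 : ∀ k, 0 ≤ a k) (hal : Tendsto a atTop (𝓝 0))
    (hD : ∀ k, 0 ≤ D k) (hs : Summable fun k => D k * a k) :
    HasSum (fun k => (a k - a (k + 1)) * ∑ j ∈ Finset.range (k + 1), D j)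
      (∑' k, D k * a k) := by
  have hpart : ∀ K, ∑ k ∈ Finset.range K, (a k - a (k + 1)) * ∑ j ∈ Finset.range (k + 1), D j
      = ∑ k ∈ Finset.range K, D k * a k - ∑ j ∈ Finset.range K, D j * a K := by
    intro K
    induction K with
    | zero => simp
    | succ K ih =>
      simp only [Finset.sum_range_succ _ K, ih, ← Finset.sum_mul]
      ring
  have hbd : Tendsto (fun K => ∑ j ∈ Finset.range K, D j * a K) atTop (𝓝 0) := by
    have hrep : ∀ K, ∑ j ∈ Finset.range K, D j * a K = ∑' j, if j < K then D j * a K else 0 := by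
      intro K
      rw [tsum_eq_sum (s := Finset.range K)]
      · exact Finset.sum_congr rfl fun j hj => by rw [if_pos (Finset.mem_range.1 hj)]
      · intro j hj
        rw [if_neg (by simpa using hj)]
    simp only [hrep]
    have := tendsto_tsum_of_dominated_convergence (𝓕 := atTop)
      (f := fun K j => if j < K then D j * a K else 0) (g := fun _ => (0 : ℝ)) hs ?_ ?_
    · simpa using this
    · intro j
      have h0 : Tendsto (fun K => D j * a K) atTop (𝓝 0) := by simpa using hal.const_mul (D j)
      refine squeeze_zero (fun K => ?_) (fun K => ?_) h0
      · split_ifs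
        · exact mul_nonneg (hD j) (ha0 K)
        · exact le_rfl
      · split_ifs
        · exact le_rfl
        · exact mul_nonneg (hD j) (ha0 K)
    · refine Eventually.of_forall fun K j => ?_
      split_ifs with h
      · rw [Real.norm_of_nonneg (mul_nonneg (hD j) (ha0 K))]
        exact mul_le_mul_of_nonneg_left (ha h.le) (hD j)
      · simpa using mul_nonneg (hD j) (ha0 j)
  rw [hasSum_iff_tendsto_nat_of_nonneg]
  · simp only [hpart]
    simpa using hs.hasSum.tendsto_sum_nat.sub hbd
  · intro k
    exact mul_nonneg (sub_nonneg.2 (ha (Nat.le_succ k))) (Finset.sum_nonneg fun j _ => hD j)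

lemma hasSum_series (h1 : 1 < γ 0) (hmono : StrictMono γ) :
    HasSum (fun k : ℕ => betaStar d γ *
      (1 / (qStar d γ k : ℝ) - 1 / (qStar d γ (k + 1) : ℝ)) *
      Real.log (Nat.card (SigStar d γ k)))
      (∑' m : ℕ, inc d γ m * (betaStar d γ * (1 / m))) := by
  have hq := qStar_strictMono h1 hmono
  have hqpos : ∀ k, (0 : ℝ) < qStar d γ k := fun k => by
    exact_mod_cast (qStar_mem h1 hmono k).1
  have hsup : ∀ m ∉ Set.range (qStar d γ), inc d γ m * (1 / (m : ℝ)) = 0 := by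
    intro m hm
    rw [inc_eq_zero h1 hmono, zero_mul]
    exact fun hM => hm (Nat.subset_range_nth (p := MStar d γ) hM)
  have hs : Summable fun k => inc d γ (qStar d γ k) * (1 / (qStar d γ k : ℝ)) :=
    (summable_inc h1 hmono).comp_injective hq.injective
  have ht : ∑' k, inc d γ (qStar d γ k) * (1 / (qStar d γ k : ℝ))
      = ∑' m : ℕ, inc d γ m * (1 / (m : ℝ)) :=
    hq.injective.tsum_eq (f := fun m : ℕ => inc d γ m * (1 / (m : ℝ)))
      (Function.support_subset_iff'.2 hsup)
  have hA := abel (a := fun k => 1 / (qStar d γ k : ℝ)) (D := fun k => inc d γ (qStar d γ k))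
    (fun i j hij => one_div_le_one_div_of_le (hqpos i) (by exact_mod_cast hq.monotone hij))
    (fun k => (one_div_pos.2 (hqpos k)).le)
    (tendsto_one_div_atTop_nhds_zero_nat.comp hq.tendsto_atTop)
    (fun k => inc_nonneg _) hs
  rw [ht] at hA
  have hB := hA.mul_left (betaStar d γ)
  have e2 : ∑' m : ℕ, inc d γ m * (betaStar d γ * (1 / m))
      = betaStar d γ * ∑' m : ℕ, inc d γ m * (1 / (m : ℝ)) := by
    rw [← tsum_mul_left]
    exact tsum_congr fun m => by ring
  rw [e2]
  refine hB.congr_fun fun k => ?_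
  rw [← ent_qStar h1 hmono, mul_assoc]
  rfl

end EntropyStar

/-- For distinct integers `1 < γ_1 < ⋯ < γ_d` (`d ≥ 1`, no
coprimality assumed), the limit `lim_{n→∞} (1/n)·log|X_{Γ;n}|` exists and equals
`∑_{k=1}^∞ β_{Γ*}·(1/q*_k − 1/q*_{k+1})·log|Σ*_k|`, the series being convergent. -/
theorem entropy_XGam_star (d : ℕ) (γ : Fin (d + 1) → ℕ)
    (h1 : 1 < γ 0) (hmono : StrictMono γ) :
    Summable (fun k : ℕ => betaStar d γ *
      (1 / (qStar d γ k : ℝ) - 1 / (qStar d γ (k + 1) : ℝ)) *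
      Real.log (Nat.card (SigStar d γ k))) ∧
    Tendsto (fun n : ℕ => Real.log (Nat.card (XGam d γ n)) / (n : ℝ)) atTop
      (nhds (∑' k : ℕ, betaStar d γ *
        (1 / (qStar d γ k : ℝ) - 1 / (qStar d γ (k + 1) : ℝ)) *
        Real.log (Nat.card (SigStar d γ k)))) := by
  have h := EntropyStar.hasSum_series h1 hmono
  refine ⟨h.summable, ?_⟩
  rw [h.tsum_eq]
  exact EntropyStar.tendsto_entropy h1 hmono
end
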